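/- Let f : P → L be a Scott continuous function from a dcpo P to a dcpo-∨↑-semilattice L, and let A ⊆ P. Then f(A) has a supremum in L if and only if f(cl(A)) has a supremum in L, and in that case sup f(A) = sup f(cl(A)), where cl(A) is the Scott closure of A in P. -/

import Mathlib

/-!
For each `u : L`, the set `{x | f x ≤ u}` is the preimage of a principal ideal under a Scott
continuous map, hence Scott closed. If it contains `A`, it therefore contains the Scott closure of
`A`. So `f '' A` and `f '' scottClosure A` have exactly the same upper bounds, and in particular the
same least upper bounds.
-/

universe u v

/-- A *dcpo*: a partial order in which every nonempty directed subset has a least upper bound. -/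
def IsDcpo (P : Type*) [PartialOrder P] : Prop :=
  ∀ d : Set P, d.Nonempty → DirectedOn (· ≤ ·) d → ∃ a, IsLUB d a

/-- A *dcpo-∨↑-semilattice*: a dcpo in which every consistent pair of elements
(i.e. pair with an upper bound) has a least upper bound. -/
def IsDcpoVSemilattice (L : Type*) [PartialOrder L] : Prop :=
  IsDcpo L ∧ ∀ x y : L, BddAbove ({x, y} : Set L) → ∃ a, IsLUB ({x, y} : Set L) a

/-- Scott continuity: `f` maps least upper bounds of nonempty directed sets to
least upper bounds of the images. -/
def IsScottContinuous {P : Type*} {L : Type*} [PartialOrder P] [PartialOrder L]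
    (f : P → L) : Prop :=
  ∀ d : Set P, d.Nonempty → DirectedOn (· ≤ ·) d → ∀ a, IsLUB d a → IsLUB (f '' d) (f a)

/-- A *Scott closed* set: a lower set closed under least upper bounds of its
nonempty directed subsets. -/
def IsScottClosed {P : Type*} [PartialOrder P] (A : Set P) : Prop :=
  IsLowerSet A ∧ ∀ d : Set P, d ⊆ A → d.Nonempty → DirectedOn (· ≤ ·) d →
    ∀ a, IsLUB d a → a ∈ A

/-- The Scott closure of a set: the smallest Scott closed set containing it. -/
def scottClosure {P : Type*} [PartialOrder P] (A : Set P) : Set P :=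
  ⋂₀ {C | IsScottClosed C ∧ A ⊆ C}

/-- A subset `A` of a dcpo `P` is *⋁-existing* if for every Scott continuous map `f`
into an arbitrary dcpo-∨↑-semilattice `L`, the supremum of `f '' A` exists in `L`. -/
def SupExisting {P : Type u} [PartialOrder P] (A : Set P) : Prop :=
  ∀ (L : Type v) [PartialOrder L], IsDcpoVSemilattice L →
    ∀ f : P → L, IsScottContinuous f → ∃ a, IsLUB (f '' A) a

/-- An *F-Scott closed* set: a Scott closed set containing the least upper bound of
each of its nonempty finite consistent subsets. -/
def IsFScottClosed {L : Type*} [PartialOrder L] (A : Set L) : Prop :=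
  IsScottClosed A ∧ ∀ F : Set L, F ⊆ A → F.Nonempty → F.Finite → BddAbove F →
    ∀ a, IsLUB F a → a ∈ A

/-- The F-Scott closure of a set: the intersection of all F-Scott closed sets containing it. -/
def fScottClosure {L : Type*} [PartialOrder L] (A : Set L) : Set L :=
  ⋂₀ {C | IsFScottClosed C ∧ A ⊆ C}

/-- A *dcpo-∨↑-semilattice homomorphism*: maps least upper bounds of nonempty directed
sets and of consistent pairs to the least upper bounds of the images. -/
def IsSemilatticeHom {L : Type*} {M : Type*} [PartialOrder L] [PartialOrder M]
    (f : L → M) : Prop :=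
  (∀ d : Set L, d.Nonempty → DirectedOn (· ≤ ·) d → ∀ a, IsLUB d a → IsLUB (f '' d) (f a)) ∧
  (∀ x y : L, BddAbove ({x, y} : Set L) → ∀ a, IsLUB ({x, y} : Set L) a →
    IsLUB (f '' ({x, y} : Set L)) (f a))

/-- A subset `A` of a dcpo-∨↑-semilattice `L` is *F-⋁-existing* if for every
dcpo-∨↑-semilattice homomorphism `f` into an arbitrary dcpo-∨↑-semilattice `M`,
the supremum of `f '' A` exists in `M`. -/
def FSupExisting {L : Type u} [PartialOrder L] (A : Set L) : Prop :=
  ∀ (M : Type v) [PartialOrder M], IsDcpoVSemilattice M →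
    ∀ f : L → M, IsSemilatticeHom f → ∃ a, IsLUB (f '' A) a

/-- `P^∨`: the family of all ⋁-existing Scott closed subsets of `P`, ordered by inclusion. -/
abbrev Pvee (P : Type u) [PartialOrder P] : Type u :=
  {A : Set P // IsScottClosed A ∧ SupExisting.{u, u} A}

theorem isScottClosed_principal {P : Type u} [PartialOrder P] (x : P) :
    IsScottClosed (Set.Iic x) := by
  constructor
  · intro a b hba ha
    exact le_trans hba ha
  · intro d hd _ _ a ha
    exact ha.2 fun y hy => hd hy

theorem supExisting_principal {P : Type u} [PartialOrder P] (x : P) :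
    SupExisting.{u, v} (Set.Iic x) := by
  intro L _ _ f hf
  have hdir : DirectedOn (· ≤ ·) (Set.Iic x) := by
    intro a ha b hb
    exact ⟨x, le_refl x, ha, hb⟩
  exact ⟨f x, hf (Set.Iic x) ⟨x, Set.mem_Iic.2 (le_refl x)⟩ hdir x isLUB_Iic⟩

/-- The embedding `j` of `P` into `P^∨`, sending `x` to the principal ideal `↓x`. -/
def jmap {P : Type u} [PartialOrder P] (x : P) : Pvee P :=
  ⟨Set.Iic x, isScottClosed_principal x, supExisting_principal.{u, u} x⟩

theorem IsScottContinuous.monotone {P : Type*} {L : Type*} [PartialOrder P] [PartialOrder L]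
    {f : P → L} (hf : IsScottContinuous f) : Monotone f := by
  intro x y hxy
  -- The down-set of `y` is directed with least upper bound `y`, and it contains `x`.
  have hdir : DirectedOn (· ≤ ·) (Set.Iic y) := fun a ha b hb => ⟨y, le_refl y, ha, hb⟩
  exact (hf (Set.Iic y) ⟨x, hxy⟩ hdir y isLUB_Iic).1 ⟨x, hxy, rfl⟩

theorem IsScottContinuous.isScottClosed_le {P : Type*} {L : Type*} [PartialOrder P]
    [PartialOrder L] {f : P → L} (hf : IsScottContinuous f) (u : L) :
    IsScottClosed {x | f x ≤ u} := by
  refine ⟨fun a b hba ha => (hf.monotone hba).trans ha, fun d hd hne hdir a ha => ?_⟩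
  refine (hf d hne hdir a ha).2 ?_
  rintro _ ⟨x, hx, rfl⟩
  exact hd hx

theorem IsScottContinuous.upperBounds_image_scottClosure {P : Type*} {L : Type*}
    [PartialOrder P] [PartialOrder L] {f : P → L} (hf : IsScottContinuous f) (A : Set P) :
    upperBounds (f '' scottClosure A) = upperBounds (f '' A) := by
  apply Set.Subset.antisymm
  · exact upperBounds_mono_set (Set.image_mono (Set.subset_sInter fun _ hC => hC.2))
  · rintro u hu _ ⟨x, hx, rfl⟩
    exact hx {x | f x ≤ u} ⟨hf.isScottClosed_le u, fun a ha => hu ⟨a, ha, rfl⟩⟩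

/-- For a Scott continuous `f : P → L` from a dcpo `P` to a dcpo-∨↑-semilattice `L`
and `A ⊆ P`, `f '' A` has a supremum iff `f '' scottClosure A` has a supremum, and in that case
the suprema coincide. -/
theorem lub_image_scottClosure {P : Type u} {L : Type v} [PartialOrder P] [PartialOrder L]
    (hP : IsDcpo P) (hL : IsDcpoVSemilattice L) (f : P → L) (hf : IsScottContinuous f)
    (A : Set P) :
    ((∃ a, IsLUB (f '' A) a) ↔ ∃ a, IsLUB (f '' scottClosure A) a) ∧
      ∀ a, IsLUB (f '' A) a → IsLUB (f '' scottClosure A) a := by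
  have h (a : L) : IsLUB (f '' A) a ↔ IsLUB (f '' scottClosure A) a := by
    rw [IsLUB, IsLUB, hf.upperBounds_image_scottClosure A]
  exact ⟨exists_congr h, fun a => (h a).1⟩
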